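/- Let r ≥ 2 and let Γ be the free group of rank r. If Δ₀ is a finitely generated subgroup of Γ, then there exist n ≥ 1 and an injective group homomorphism ρ : Γ → GL(n, ℂ) such that every matrix entry of ρ(γ) is algebraic over ℚ for every γ ∈ Γ, and for every γ ∈ Γ with γ ∉ Δ₀ there exists a polynomial P in the n² matrix-entry variables with complex coefficients such that P vanishes at ρ(δ) for every δ ∈ Δ₀ but P(ρ(γ)) ≠ 0. -/

import Mathlib

/-- Evaluate a polynomial in the `n²` matrix-entry variables at a matrix in `GL(n, ℂ)`. -/
noncomputable def evalAtGL {n : ℕ} (A : GL (Fin n) ℂ)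
    (P : MvPolynomial (Fin n × Fin n) ℂ) : ℂ :=
  MvPolynomial.eval (fun p => (A : Matrix (Fin n) (Fin n) ℂ) p.1 p.2) P

/-!
The generators act on the coset space `Γ ⧸ Δ₀`. Restrict this partial action to a finite set `W` of
cosets through which the generators of `Δ₀` can be traced, starting and ending at the base coset
`b`, and complete it to permutations of `W`. Label each genuine edge of the resulting finite graph
with its generator `i`, and each edge added by the completion with a new letter `i'`. Sending the
letters to elements of `GL₂(ℤ)` that freely generate a free group turns the graph into a monomial
representation of `Γ` with blocks in `GL₂(ℤ)`; an extra vertex `o` with a genuine loop for each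
generator makes it faithful. The block at `(b, b)` equals the block at `(o, o)` on `Δ₀`. Conversely,
let the genuine letters act on `Γ ⧸ Δ₀` by translation and the new letters by the completed
permutations, extended by the identity outside `W`: if the two blocks of `γ` agree, then the label
of the path of `γ` from `b` to `b` is the genuine word `γ`, so `γ` fixes the base coset. Hence `Δ₀`
is cut out by linear equations between matrix entries.
-/

open Matrix

section FreeSubgroupsOfGLTwo

/-- The integral parabolic matrix fixing `(t, 1)`: in the coordinates `(v 0 - t * v 1, v 1)` it is
`(u, w) ↦ (u, w + 2 * u)`. -/
def parabolic (t : ℤ) : GL (Fin 2) ℤ where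
  val := !![1 + 2 * t, -2 * t ^ 2; 2, 1 - 2 * t]
  inv := !![1 - 2 * t, 2 * t ^ 2; -2, 1 + 2 * t]
  val_inv := by rw [mul_fin_two, one_fin_two]; congr! 3 <;> ring_nf
  inv_val := by rw [mul_fin_two, one_fin_two]; congr! 3 <;> ring_nf

theorem parabolic_smul (t : ℤ) (v : {v : Fin 2 → ℤ // v ≠ 0}) :
    (parabolic t • v).1 =
      ![(1 + 2 * t) * v.1 0 + -2 * t ^ 2 * v.1 1, 2 * v.1 0 + (1 - 2 * t) * v.1 1] := by
  change (parabolic t).1 *ᵥ v.1 = _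
  ext i
  fin_cases i <;> simp [parabolic, mulVec, dotProduct]

theorem parabolic_inv_smul (t : ℤ) (v : {v : Fin 2 → ℤ // v ≠ 0}) :
    ((parabolic t)⁻¹ • v).1 =
      ![(1 - 2 * t) * v.1 0 + 2 * t ^ 2 * v.1 1, -2 * v.1 0 + (1 + 2 * t) * v.1 1] := by
  change (parabolic t).inv *ᵥ v.1 = _
  ext i
  fin_cases i <;> simp [parabolic, mulVec, dotProduct]

/-- The attracting ping-pong region of `parabolic t`. -/
def attractingCone (t : ℤ) : Set {v : Fin 2 → ℤ // v ≠ 0} :=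
  {v | (v.1 0 - t * v.1 1) ^ 2 ≤ (v.1 0 - t * v.1 1) * v.1 1}

/-- The attracting ping-pong region of `(parabolic t)⁻¹`. -/
def repellingCone (t : ℤ) : Set {v : Fin 2 → ℤ // v ≠ 0} :=
  {v | (v.1 0 - t * v.1 1) * v.1 1 < -(v.1 0 - t * v.1 1) ^ 2}

/-- The vectors of slope within distance one of `t`; it contains both ping-pong regions of
`parabolic t`. -/
def slopeCone (t : ℤ) : Set {v : Fin 2 → ℤ // v ≠ 0} :=
  {v | |v.1 0 - t * v.1 1| ≤ |v.1 1|}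

theorem attractingCone_subset_slopeCone (t : ℤ) : attractingCone t ⊆ slopeCone t := fun v hv => by
  simp only [attractingCone, slopeCone, Set.mem_ofPred_eq] at hv ⊢
  rw [← sq_le_sq]
  nlinarith [sq_nonneg (v.1 1 - (v.1 0 - t * v.1 1))]

theorem repellingCone_subset_slopeCone (t : ℤ) : repellingCone t ⊆ slopeCone t := fun v hv => by
  simp only [repellingCone, slopeCone, Set.mem_ofPred_eq] at hv ⊢
  rw [← sq_le_sq]
  nlinarith [sq_nonneg (v.1 1 + (v.1 0 - t * v.1 1))]

theorem disjoint_slopeCone {s t : ℤ} (hst : 3 ≤ |s - t|) :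
    Disjoint (slopeCone s) (slopeCone t) := by
  refine Set.disjoint_left.2 fun v hs ht => v.2 ?_
  simp only [slopeCone, Set.mem_ofPred_eq] at hs ht
  have bound : |s - t| * |v.1 1| ≤ |v.1 0 - t * v.1 1| + |v.1 0 - s * v.1 1| := by
    rw [← abs_mul, show (s - t) * v.1 1 = (v.1 0 - t * v.1 1) - (v.1 0 - s * v.1 1) by ring]
    exact abs_sub _ _
  have snd_eq_zero : v.1 1 = 0 := abs_eq_zero.1 (by nlinarith [abs_nonneg (v.1 1)])
  have fst_eq_zero : v.1 0 = 0 := by simpa [snd_eq_zero] using hs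
  ext i
  fin_cases i
  exacts [fst_eq_zero, snd_eq_zero]

theorem disjoint_attractingCone_repellingCone (t : ℤ) :
    Disjoint (attractingCone t) (repellingCone t) := by
  refine Set.disjoint_left.2 fun v ha hr => ?_
  simp only [attractingCone, repellingCone, Set.mem_ofPred_eq] at ha hr
  nlinarith [sq_nonneg (v.1 0 - t * v.1 1)]

theorem attractingCone_nonempty (t : ℤ) : (attractingCone t).Nonempty :=
  ⟨⟨![t, 1], fun h => by simpa using congrFun h 1⟩, by simp [attractingCone]⟩

open scoped Pointwise

theorem parabolic_smul_compl_repellingCone_subset (t : ℤ) :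
    parabolic t • (repellingCone t)ᶜ ⊆ attractingCone t := by
  rintro _ ⟨v, hv, rfl⟩
  simp only [attractingCone, repellingCone, Set.mem_ofPred_eq, Set.mem_compl_iff, not_lt,
    parabolic_smul, cons_val_zero, cons_val_one] at hv ⊢
  linarith

theorem parabolic_inv_smul_compl_attractingCone_subset (t : ℤ) :
    (parabolic t)⁻¹ • (attractingCone t)ᶜ ⊆ repellingCone t := by
  rintro _ ⟨v, hv, rfl⟩
  simp only [attractingCone, repellingCone, Set.mem_ofPred_eq, Set.mem_compl_iff, not_le,
    parabolic_inv_smul, cons_val_zero, cons_val_one] at hv ⊢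
  linarith

theorem lift_parabolic_injective {κ : Type} [Nontrivial κ] {t : κ → ℤ}
    (ht : Pairwise fun i j => 3 ≤ |t i - t j|) :
    Function.Injective (FreeGroup.lift fun i => parabolic (t i)) := by
  have slope_disjoint {i j : κ} (hij : i ≠ j) := disjoint_slopeCone (ht hij)
  have attr_sub (i : κ) := attractingCone_subset_slopeCone (t i)
  have rep_sub (i : κ) := repellingCone_subset_slopeCone (t i)
  refine FreeGroup.injective_lift_of_ping_pong _ (fun i => attractingCone (t i))
    (fun i => repellingCone (t i)) (fun i => attractingCone_nonempty (t i))
    (fun i j hij => (slope_disjoint hij).mono (attr_sub i) (attr_sub j))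
    (fun i j hij => (slope_disjoint hij).mono (rep_sub i) (rep_sub j))
    (fun i j => ?_)
    (fun i => parabolic_smul_compl_repellingCone_subset (t i))
    (fun i => parabolic_inv_smul_compl_attractingCone_subset (t i))
  obtain rfl | hij := eq_or_ne i j
  · exact disjoint_attractingCone_repellingCone (t i)
  · exact (slope_disjoint hij).mono (attr_sub i) (rep_sub j)

theorem exists_injective_freeGroup_to_GL_two_int (κ : Type*) [Countable κ] :
    ∃ φ : FreeGroup κ →* GL (Fin 2) ℤ, Function.Injective φ := by
  obtain ⟨code, hcode⟩ := exists_injective_nat κ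
  have separated : Pairwise fun i j : ℕ => 3 ≤ |3 * (i : ℤ) - 3 * (j : ℤ)| := fun i j hij => by
    change 3 ≤ |3 * (i : ℤ) - 3 * (j : ℤ)|
    rw [le_abs]
    omega
  exact ⟨(FreeGroup.lift fun i : ℕ => parabolic (3 * i)).comp (FreeGroup.map code),
    (lift_parabolic_injective separated).comp (FreeGroup.map_injective hcode)⟩

end FreeSubgroupsOfGLTwo

section MonomialMatrices

variable {V R : Type*} [DecidableEq V] [Semiring R]

/-- The matrix `A` sends the basis vector `e_x` to `e_y r`, i.e. `r` in row `y` is the only nonzero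
entry of column `x`. Coefficients act on the right since `R` need not be commutative. -/
def SendsBasis (A : Matrix V V R) (x y : V) (r : R) : Prop :=
  A.col x = Pi.single y r

theorem SendsBasis.apply_eq {A : Matrix V V R} {x y : V} {r : R} (h : SendsBasis A x y r) (z : V) :
    A z x = (Pi.single y r : V → R) z :=
  congrFun h z

theorem sendsBasis_one (x : V) : SendsBasis (1 : Matrix V V R) x x 1 := by
  ext z
  simp [one_apply, Pi.single_apply]

variable [Fintype V]

theorem SendsBasis.mul {A B : Matrix V V R} {x y z : V} {r s : R}
    (hA : SendsBasis A y z s) (hB : SendsBasis B x y r) : SendsBasis (A * B) x z (s * r) := by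
  ext w
  calc (A * B) w x
      = ∑ v, A w v * (Pi.single y r : V → R) v := by simp only [mul_apply, hB.apply_eq]
    _ = A w y * r := dotProduct_single _ _ _
    _ = (Pi.single z (s * r) : V → R) w := by
      rw [hA.apply_eq, Pi.single_apply, Pi.single_apply, ite_mul, zero_mul]

theorem SendsBasis.inv {A : (Matrix V V R)ˣ} {x y : V} {r : Rˣ}
    (h : SendsBasis (A : Matrix V V R) x y r) :
    SendsBasis (↑A⁻¹ : Matrix V V R) y x ↑r⁻¹ := by
  ext w
  rw [col_apply, ← Units.mul_left_inj r]
  calc (↑A⁻¹ : Matrix V V R) w y * r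
      = ∑ v, (↑A⁻¹ : Matrix V V R) w v * (Pi.single y (r : R) : V → R) v :=
        (dotProduct_single _ _ _).symm
    _ = (↑A⁻¹ * A : Matrix V V R) w x := by simp only [mul_apply, h.apply_eq]
    _ = (Pi.single x ↑r⁻¹ : V → R) w * r := by
      rw [Units.inv_mul, one_apply, Pi.single_apply, ite_mul, zero_mul, Units.inv_mul]

/-- The invertible monomial matrix sending `e_x` to `e_(σ x) (u x)`. -/
def monomialUnit (σ : Equiv.Perm V) (u : V → Rˣ) : (Matrix V V R)ˣ where
  val := of fun y x => if y = σ x then (u x : R) else 0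
  inv := of fun x y => if x = σ.symm y then (↑(u x)⁻¹ : R) else 0
  val_inv := by
    ext y x
    simp [mul_apply, one_apply]
  inv_val := by
    ext y x
    obtain rfl | hyx := eq_or_ne y x
    · simp [mul_apply, Equiv.eq_symm_apply]
    · simp [mul_apply, one_apply, Equiv.eq_symm_apply, hyx]

theorem sendsBasis_monomialUnit (σ : Equiv.Perm V) (u : V → Rˣ) (x : V) :
    SendsBasis (monomialUnit σ u : Matrix V V R) x (σ x) (u x) := by
  ext y
  simp [monomialUnit, Pi.single_apply]

/-- The elements `g` for which `e_x` is an eigenvector of `M g` with eigenvalue `T g`. -/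
def eigenSubgroup {G : Type*} [Group G] (M : G →* (Matrix V V R)ˣ) (T : G →* Rˣ) (x : V) :
    Subgroup G where
  carrier := {g | SendsBasis (M g : Matrix V V R) x x (T g)}
  one_mem' := by simpa using sendsBasis_one x
  mul_mem' hg hh := by simpa using hg.mul hh
  inv_mem' hg := by simpa using hg.inv

theorem apply_self_of_mem_eigenSubgroup {G : Type*} [Group G] {M : G →* (Matrix V V R)ˣ}
    {T : G →* Rˣ} {x : V} {g : G} (hg : g ∈ eigenSubgroup M T x) : (M g).1 x x = T g :=
  (SendsBasis.apply_eq hg x).trans (Pi.single_eq_same x _)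

end MonomialMatrices

section CompletedAction

variable {G X : Type*} [Group G] [MulAction G X]

theorem exists_perm_extending_smul (W : Finset X) (g : G) :
    ∃ σ : Equiv.Perm W, ∀ x : W, g • (x : X) ∈ W → (σ x : X) = g • (x : X) := by
  obtain ⟨σ, hσ⟩ := Equiv.Perm.exists_extending_pair
    (fun x : {x : W // g • (x : X) ∈ W} => x.1) (fun x => ⟨g • (x.1 : X), x.2⟩)
    Subtype.val_injective
    (fun x y hxy => Subtype.ext (Subtype.ext (MulAction.injective g (congrArg Subtype.val hxy))))
  exact ⟨σ, fun x hx => congrArg Subtype.val (hσ ⟨x, hx⟩)⟩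

/-- A permutation of `W` that agrees with the action of `g` wherever the latter stays in `W`. -/
noncomputable def completedPerm (W : Finset X) (g : G) : Equiv.Perm W :=
  (exists_perm_extending_smul W g).choose

theorem coe_completedPerm_of_smul_mem {W : Finset X} {g : G} {x : W} (hx : g • (x : X) ∈ W) :
    (completedPerm W g x : X) = g • (x : X) :=
  (exists_perm_extending_smul W g).choose_spec x hx

end CompletedAction

section SchreierRepresentation

variable {ι X R : Type*} [MulAction (FreeGroup ι) X] [DecidableEq X] [Semiring R]

/-- The inclusion of the free group on `ι` into the free group on the letters `(i, false)`, standing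
for the generators themselves, and `(i, true)`, labelling the edges added by `completedPerm`. -/
def genuineHom (ι : Type*) : FreeGroup ι →* FreeGroup (ι × Bool) :=
  FreeGroup.map fun i => (i, false)

theorem genuineHom_injective : Function.Injective (genuineHom ι) :=
  FreeGroup.map_injective fun _ _ h => congrArg Prod.fst h

/-- The label of the edge from `x` to `completedPerm W (FreeGroup.of i) x`. -/
def edgeLabel (W : Finset X) (i : ι) (x : X) : ι × Bool :=
  (i, decide (FreeGroup.of i • x ∉ W))

/-- The action of the labels on `X`: genuine letters act as the generators do, the others by the
completed permutations, extended by the identity outside `W`. -/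
noncomputable def labelAction (W : Finset X) : FreeGroup (ι × Bool) →* Equiv.Perm X :=
  FreeGroup.lift fun a =>
    if a.2 then Equiv.Perm.ofSubtype (completedPerm W (FreeGroup.of a.1))
    else MulAction.toPerm (FreeGroup.of a.1)

theorem labelAction_edgeLabel (W : Finset X) (i : ι) (x : W) :
    labelAction W (FreeGroup.of (edgeLabel W i x)) x = completedPerm W (FreeGroup.of i) x := by
  by_cases hx : FreeGroup.of i • (x : X) ∈ W
  · simp [labelAction, edgeLabel, hx, coe_completedPerm_of_smul_mem hx]
  · simp [labelAction, edgeLabel, hx]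

theorem labelAction_genuineHom (W : Finset X) (γ : FreeGroup ι) (x : X) :
    labelAction W (genuineHom ι γ) x = γ • x := by
  have hom_eq : (labelAction W).comp (genuineHom ι) = MulAction.toPermHom (FreeGroup ι) X := by
    ext i y
    simp [labelAction, genuineHom]
  exact congrArg (fun σ : Equiv.Perm X => σ x) (DFunLike.congr_fun hom_eq γ)

/-- The monomial representation attached to the completed Schreier graph on `W`, whose coefficient
along an edge is the image of its label under `φ`. -/
noncomputable def schreierRep (φ : FreeGroup (ι × Bool) →* Rˣ) (W : Finset X) :
    FreeGroup ι →* (Matrix W W R)ˣ :=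
  FreeGroup.lift fun i => monomialUnit (completedPerm W (FreeGroup.of i))
    fun x => φ (FreeGroup.of (edgeLabel W i x))

variable (φ : FreeGroup (ι × Bool) →* Rˣ) {W : Finset X}

theorem sendsBasis_schreierRep_of (i : ι) (x : W) :
    SendsBasis (schreierRep φ W (FreeGroup.of i) : Matrix W W R) x
      (completedPerm W (FreeGroup.of i) x) (φ (FreeGroup.of (edgeLabel W i x))) := by
  rw [schreierRep, FreeGroup.lift_apply_of]
  exact sendsBasis_monomialUnit _ _ x

theorem sendsBasis_schreierRep_of_genuine {i : ι} {x y : W}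
    (hxy : FreeGroup.of i • (x : X) = y) :
    SendsBasis (schreierRep φ W (FreeGroup.of i) : Matrix W W R) x y
      (φ (genuineHom ι (FreeGroup.of i))) := by
  have smul_mem : FreeGroup.of i • (x : X) ∈ W := hxy ▸ y.2
  have target_eq : completedPerm W (FreeGroup.of i) x = y :=
    Subtype.ext ((coe_completedPerm_of_smul_mem smul_mem).trans hxy)
  simpa [target_eq, edgeLabel, smul_mem, genuineHom] using sendsBasis_schreierRep_of φ i x

theorem exists_sendsBasis_schreierRep (γ : FreeGroup ι) (x : W) :
    ∃ (y : W) (w : FreeGroup (ι × Bool)), labelAction W w x = y ∧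
      SendsBasis (schreierRep φ W γ : Matrix W W R) x y (φ w) := by
  induction γ using FreeGroup.induction_on generalizing x with
  | C1 => exact ⟨x, 1, by simp, by simpa using sendsBasis_one x⟩
  | of i => exact ⟨_, _, labelAction_edgeLabel W i x, sendsBasis_schreierRep_of φ i x⟩
  | inv_of i _ =>
    obtain ⟨y, rfl⟩ := (completedPerm W (FreeGroup.of i)).surjective x
    refine ⟨y, (FreeGroup.of (edgeLabel W i y))⁻¹, ?_, ?_⟩
    · rw [map_inv, Equiv.Perm.inv_eq_iff_eq, labelAction_edgeLabel]
    · simpa using (sendsBasis_schreierRep_of φ i y).inv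
  | mul γ δ hγ hδ =>
    obtain ⟨y, v, hvx, hδx⟩ := hδ x
    obtain ⟨z, w, hwy, hγy⟩ := hγ y
    exact ⟨z, w * v, by simp [hvx, hwy], by simpa using hγy.mul hδx⟩

theorem exists_finset_sendsBasis_schreierRep (γ : FreeGroup ι) (x : X) :
    ∃ T : Finset X, ∀ W : Finset X, T ⊆ W → ∃ y z : W, (y : X) = x ∧ (z : X) = γ • x ∧
      SendsBasis (schreierRep φ W γ : Matrix W W R) y z (φ (genuineHom ι γ)) := by
  induction γ using FreeGroup.induction_on generalizing x with
  | C1 =>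
    refine ⟨{x}, fun W hW => ?_⟩
    have hx : x ∈ W := hW (Finset.mem_singleton_self x)
    exact ⟨⟨x, hx⟩, ⟨x, hx⟩, rfl, (one_smul _ x).symm, by simpa using sendsBasis_one _⟩
  | of i =>
    refine ⟨{x, FreeGroup.of i • x}, fun W hW => ?_⟩
    exact ⟨⟨x, hW (by simp)⟩, ⟨FreeGroup.of i • x, hW (by simp)⟩, rfl, rfl,
      sendsBasis_schreierRep_of_genuine φ rfl⟩
  | inv_of i hi =>
    obtain ⟨T, hT⟩ := hi ((FreeGroup.of i)⁻¹ • x)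
    refine ⟨T, fun W hW => ?_⟩
    obtain ⟨y, z, hy, hz, hyz⟩ := hT W hW
    exact ⟨z, y, by rw [hz, smul_inv_smul], hy, by simpa using hyz.inv⟩
  | mul γ δ hγ hδ =>
    obtain ⟨S, hS⟩ := hδ x
    obtain ⟨T, hT⟩ := hγ (δ • x)
    refine ⟨S ∪ T, fun W hW => ?_⟩
    obtain ⟨y, z, hy, hz, hyz⟩ := hS W (Finset.union_subset_left hW)
    obtain ⟨z', w, hz', hw, hzw⟩ := hT W (Finset.union_subset_right hW)
    obtain rfl : z' = z := Subtype.ext (hz'.trans hz.symm)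
    exact ⟨y, w, hy, by rw [hw, mul_smul], by simpa using hzw.mul hyz⟩

theorem exists_finset_mem_eigenSubgroup {γ : FreeGroup ι} {x : X} (hγ : γ • x = x) :
    ∃ T : Finset X, ∀ W : Finset X, T ⊆ W → ∀ hx : x ∈ W,
      γ ∈ eigenSubgroup (schreierRep φ W) (φ.comp (genuineHom ι)) ⟨x, hx⟩ := by
  obtain ⟨T, hT⟩ := exists_finset_sendsBasis_schreierRep φ γ x
  refine ⟨T, fun W hW hx => ?_⟩
  obtain ⟨y, z, hy, hz, hyz⟩ := hT W hW
  obtain rfl : y = ⟨x, hx⟩ := Subtype.ext hy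
  obtain rfl : z = ⟨x, hx⟩ := Subtype.ext (hz.trans hγ)
  exact hyz

theorem exists_finset_le_eigenSubgroup {x : X} {Δ : Subgroup (FreeGroup ι)} (hΔ : Δ.FG)
    (hfix : ∀ δ ∈ Δ, δ • x = x) :
    ∃ T : Finset X, ∀ W : Finset X, T ⊆ W → ∀ hx : x ∈ W,
      Δ ≤ eigenSubgroup (schreierRep φ W) (φ.comp (genuineHom ι)) ⟨x, hx⟩ := by
  obtain ⟨S, rfl⟩ := hΔ
  choose! T hT using fun s (hs : s ∈ S) =>
    exists_finset_mem_eigenSubgroup φ (hfix s (Subgroup.subset_closure hs))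
  refine ⟨S.biUnion T, fun W hW hx => (Subgroup.closure_le _).2 fun s hs => ?_⟩
  exact hT s hs W ((Finset.subset_biUnion_of_mem T hs).trans hW) hx

theorem eigenSubgroup_schreierRep_eq_top {x : W} (hx : ∀ i : ι, FreeGroup.of i • (x : X) = x) :
    eigenSubgroup (schreierRep φ W) (φ.comp (genuineHom ι)) x = ⊤ := by
  rw [eq_top_iff, ← FreeGroup.closure_range_of, Subgroup.closure_le]
  rintro _ ⟨i, rfl⟩
  exact sendsBasis_schreierRep_of_genuine φ (hx i)

theorem smul_eq_of_schreierRep_apply_eq [Nontrivial R] {φ : FreeGroup (ι × Bool) →* Rˣ}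
    (hφ : Function.Injective φ) {γ : FreeGroup ι} {x : W}
    (hγ : (schreierRep φ W γ : Matrix W W R) x x = φ (genuineHom ι γ)) :
    γ • (x : X) = x := by
  obtain ⟨y, w, hwx, hxy⟩ := exists_sendsBasis_schreierRep φ γ x
  have single_eq := (hxy.apply_eq x).symm.trans hγ
  obtain rfl : x = y := by
    by_contra hne
    exact (φ (genuineHom ι γ)).ne_zero (single_eq.symm.trans (Pi.single_eq_of_ne hne _))
  obtain rfl : w = genuineHom ι γ := hφ (Units.ext (by simpa using single_eq))
  rwa [labelAction_genuineHom] at hwx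

theorem exists_finset_injective_schreierRep_and_mem_iff [Nontrivial R]
    {φ : FreeGroup (ι × Bool) →* Rˣ} (hφ : Function.Injective φ)
    {Δ : Subgroup (FreeGroup ι)} [DecidableEq (FreeGroup ι ⧸ Δ)] (hΔ : Δ.FG) :
    ∃ (W : Finset (Option (FreeGroup ι ⧸ Δ))) (o b : W),
      Function.Injective (schreierRep φ W) ∧
      ∀ γ, γ ∈ Δ ↔ (schreierRep φ W γ : Matrix W W R) b b = (schreierRep φ W γ).1 o o := by
  let base : Option (FreeGroup ι ⧸ Δ) := some (1 : FreeGroup ι)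
  have smul_base (γ : FreeGroup ι) : γ • base = base ↔ γ ∈ Δ := by
    rw [Option.smul_some, Option.some_inj, ← MulAction.mem_stabilizer_iff,
      MulAction.stabilizer_quotient]
  obtain ⟨T, hT⟩ := exists_finset_le_eigenSubgroup φ hΔ fun δ hδ => (smul_base δ).2 hδ
  let W := insert none (insert base T)
  let o : W := ⟨none, by simp [W]⟩
  let b : W := ⟨base, by simp [W]⟩
  have loop_block (γ : FreeGroup ι) : (schreierRep φ W γ).1 o o = φ (genuineHom ι γ) :=
    apply_self_of_mem_eigenSubgroup <|
      eigenSubgroup_schreierRep_eq_top φ (x := o) (fun _ => Option.smul_none _) ▸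
        Subgroup.mem_top γ
  refine ⟨W, o, b, fun γ δ h => genuineHom_injective (hφ (Units.ext ?_)),
    fun γ => ⟨fun hγ => ?_, fun h => ?_⟩⟩
  · rw [← loop_block, ← loop_block, h]
  · rw [loop_block]
    exact apply_self_of_mem_eigenSubgroup (hT W (fun x hx => by simp [W, hx]) b.2 hγ)
  · exact (smul_base γ).1 (smul_eq_of_schreierRep_apply_eq hφ (h.trans (loop_block γ)))

end SchreierRepresentation

/-- Invertible matrices of square blocks, regarded as invertible matrices indexed through `e`. -/
def flattenBlocks {m k n S : Type*} [Fintype m] [Fintype k] [Fintype n] [DecidableEq m]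
    [DecidableEq k] [DecidableEq n] [CommRing S] (e : m × k ≃ n) :
    (Matrix m m (Matrix k k S))ˣ ≃* GL n S :=
  Units.mapEquiv ((compRingEquiv m k S).trans (reindexRingEquiv S e)).toMulEquiv

theorem flattenBlocks_apply {m k n S : Type*} [Fintype m] [Fintype k] [Fintype n] [DecidableEq m]
    [DecidableEq k] [DecidableEq n] [CommRing S] (e : m × k ≃ n)
    (A : (Matrix m m (Matrix k k S))ˣ) (x y : m) (s t : k) :
    (flattenBlocks e A).1 (e (x, s)) (e (y, t)) = A.1 x y s t := by
  simp [flattenBlocks]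

theorem exists_injective_rep_separating_by_entries {ι k S : Type*} [Fintype k] [DecidableEq k]
    [Nonempty k] [CommRing S] [Nontrivial S] {φ : FreeGroup (ι × Bool) →* GL k S}
    (hφ : Function.Injective φ) {Δ : Subgroup (FreeGroup ι)} (hΔ : Δ.FG) :
    ∃ (n : ℕ) (ρ : FreeGroup ι →* GL (Fin n) S), 1 ≤ n ∧ Function.Injective ρ ∧
      ∀ γ ∉ Δ, ∃ p q : Fin n × Fin n,
        (∀ δ ∈ Δ, (ρ δ).1 p.1 p.2 = (ρ δ).1 q.1 q.2) ∧ (ρ γ).1 p.1 p.2 ≠ (ρ γ).1 q.1 q.2 := by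
  classical
  obtain ⟨W, o, b, hinj, hmem⟩ := exists_finset_injective_schreierRep_and_mem_iff hφ hΔ
  let e := Fintype.equivFin (W × k)
  refine ⟨_, (flattenBlocks e).toMonoidHom.comp (schreierRep φ W),
    Fintype.card_pos_iff.2 ⟨(o, Classical.arbitrary k)⟩, (flattenBlocks e).injective.comp hinj,
    fun γ hγ => ?_⟩
  obtain ⟨s, t, hst⟩ : ∃ s t, (schreierRep φ W γ).1 b b s t ≠ (schreierRep φ W γ).1 o o s t := by
    simpa [hmem, ← Matrix.ext_iff] using hγ
  refine ⟨(e (b, s), e (b, t)), (e (o, s), e (o, t)), fun δ hδ => ?_, ?_⟩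
  · simp [flattenBlocks_apply, (hmem δ).1 hδ]
  · simpa [flattenBlocks_apply] using hst

theorem evalAtGL_X_sub_X {n : ℕ} (A : GL (Fin n) ℂ) (p q : Fin n × Fin n) :
    evalAtGL A (MvPolynomial.X p - MvPolynomial.X q) = A.1 p.1 p.2 - A.1 q.1 q.2 := by
  simp [evalAtGL]

theorem free_subgroup_zariski_closed_algebraic_general {ι : Type*} [Countable ι]
    (Δ₀ : Subgroup (FreeGroup ι)) (hΔ₀ : Δ₀.FG) :
    ∃ (n : ℕ) (ρ : FreeGroup ι →* GL (Fin n) ℂ), 1 ≤ n ∧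
      Function.Injective ρ ∧
      (∀ (γ : FreeGroup ι) (i j : Fin n),
        ∃ a : ℤ, (ρ γ : Matrix (Fin n) (Fin n) ℂ) i j = a) ∧
      ∀ γ : FreeGroup ι, γ ∉ Δ₀ →
        ∃ P : MvPolynomial (Fin n × Fin n) ℂ,
          (∀ δ ∈ Δ₀, evalAtGL (ρ δ) P = 0) ∧ evalAtGL (ρ γ) P ≠ 0 := by
  obtain ⟨φ, hφ⟩ := exists_injective_freeGroup_to_GL_two_int (ι × Bool)
  obtain ⟨n, ρ, hn, hρ, hsep⟩ := exists_injective_rep_separating_by_entries hφ hΔ₀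
  refine ⟨n, (GeneralLinearGroup.map (Int.castRingHom ℂ)).comp ρ, hn, ?_,
    fun γ i j => ⟨(ρ γ).1 i j, rfl⟩, fun γ hγ => ?_⟩
  · exact (Units.map_injective (Matrix.map_injective Int.cast_injective)).comp hρ
  · obtain ⟨p, q, hΔ, hne⟩ := hsep γ hγ
    refine ⟨MvPolynomial.X p - MvPolynomial.X q, fun δ hδ => ?_, ?_⟩
    · simp [evalAtGL_X_sub_X, hΔ δ hδ]
    · simpa [evalAtGL_X_sub_X, sub_eq_zero] using hne

/-- Refinement of Theorem 1.1 (free case): the separating faithful representation can be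
chosen with all matrix entries algebraic over `ℚ`. -/
theorem free_subgroup_zariski_closed_algebraic (r : ℕ) (hr : 2 ≤ r)
    (Δ₀ : Subgroup (FreeGroup (Fin r))) (hΔ₀ : Δ₀.FG) :
    ∃ (n : ℕ) (ρ : FreeGroup (Fin r) →* GL (Fin n) ℂ), 1 ≤ n ∧
      Function.Injective ρ ∧
      (∀ (γ : FreeGroup (Fin r)) (i j : Fin n),
        IsAlgebraic ℚ ((ρ γ : Matrix (Fin n) (Fin n) ℂ) i j)) ∧
      ∀ γ : FreeGroup (Fin r), γ ∉ Δ₀ →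
        ∃ P : MvPolynomial (Fin n × Fin n) ℂ,
          (∀ δ ∈ Δ₀, evalAtGL (ρ δ) P = 0) ∧ evalAtGL (ρ γ) P ≠ 0 := by
  obtain ⟨n, ρ, hn, hinj, hint, hsep⟩ := free_subgroup_zariski_closed_algebraic_general Δ₀ hΔ₀
  exact ⟨n, ρ, hn, hinj, fun γ i j => (hint γ i j).elim fun a h => h ▸ isAlgebraic_intCast a, hsep⟩
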